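/- arXiv:math/0108124 — 3 statements merged into one kernel-verified Lean document; each statement's English description precedes it below -/
import Mathlib

section
/- Let X and Y be real normed vector spaces with X infinite-dimensional, let T : X → Y be a bounded linear operator, and let E be a dense linear subspace of X. Then Γ(T|_E) = Γ(T), where Γ(T|_E) is computed with E in place of X; i.e., the quantity Γ is densely invariant for bounded operators. -/
/-- The operator norm of the restriction of `T` to a subspace `M`. -/
noncomputable def restrictedNorm {X Y : Type*} [NormedAddCommGroup X] [NormedSpace ℝ X]
    [NormedAddCommGroup Y] [NormedSpace ℝ Y] (T : X →L[ℝ] Y) (M : Submodule ℝ X) : ℝ :=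
  ‖T.comp M.subtypeL‖

/-- `Γ(T) = inf_{M ∈ I(X)} ‖T|_M‖`, the infimum of the norms of the restrictions of `T`
to infinite-dimensional subspaces of the domain. -/
noncomputable def opGamma {X Y : Type*} [NormedAddCommGroup X] [NormedSpace ℝ X]
    [NormedAddCommGroup Y] [NormedSpace ℝ Y] (T : X →L[ℝ] Y) : ℝ :=
  sInf {r : ℝ | ∃ M : Submodule ℝ X, ¬ FiniteDimensional ℝ M ∧ r = restrictedNorm T M}

lemma restrictedNorm_nonneg {X Y : Type*} [NormedAddCommGroup X] [NormedSpace ℝ X]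
    [NormedAddCommGroup Y] [NormedSpace ℝ Y] (T : X →L[ℝ] Y) (M : Submodule ℝ X) :
    0 ≤ restrictedNorm T M := by
  unfold restrictedNorm
  exact ContinuousLinearMap.opNorm_nonneg _

/-- A triangular system of unit vectors and functionals in an infinite-dimensional subspace. -/
lemma exists_triangular {X : Type*} [NormedAddCommGroup X] [NormedSpace ℝ X]
    (M : Submodule ℝ X) (hM : ¬ FiniteDimensional ℝ M) :
    ∃ (x : ℕ → X) (f : ℕ → (X →L[ℝ] ℝ)), (∀ n, x n ∈ M ∧ ‖x n‖ = 1 ∧ ‖f n‖ ≤ 1 ∧ f n (x n) = 1) ∧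
      ∀ m n, m < n → f m (x n) = 0 := by
  obtain ⟨g, hg, hg'⟩ := exists_seq_of_forall_finset_exists
    (fun p : X × (X →L[ℝ] ℝ) => p.1 ∈ M ∧ ‖p.1‖ = 1 ∧ ‖p.2‖ ≤ 1 ∧ p.2 p.1 = 1)
    (fun p q => p.2 q.1 = 0) (by
      intro s _
      let L : M →ₗ[ℝ] (s → ℝ) := LinearMap.pi fun i => (i.1.2 : X →ₗ[ℝ] ℝ) ∘ₗ M.subtype
      have hL : ¬ Function.Injective L := fun h => hM (FiniteDimensional.of_injective L h)
      rw [← LinearMap.ker_eq_bot, Submodule.eq_bot_iff] at hL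
      push Not at hL
      obtain ⟨z, hz, hz0⟩ := hL
      have hz0' : ‖(z : X)‖ ≠ 0 := by simpa using hz0
      have hn : ‖(‖(z : X)‖⁻¹ • (z : X))‖ = 1 := by
        rw [norm_smul, norm_inv, norm_norm, inv_mul_cancel₀ hz0']
      obtain ⟨f, hf1, hf2⟩ := exists_dual_vector ℝ (‖(z : X)‖⁻¹ • (z : X))
        (by intro h0; rw [h0] at hn; exact zero_ne_one hn)
      refine ⟨(‖(z : X)‖⁻¹ • (z : X), f), ⟨M.smul_mem _ z.2, hn, hf1.le, ?_⟩, ?_⟩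
      · simpa [hn] using hf2
      · intro p hp
        have := congrFun (LinearMap.mem_ker.1 hz) ⟨p, hp⟩
        have h2 : p.2 (z : X) = 0 := this
        simp [h2])
  exact ⟨fun n => (g n).1, fun n => (g n).2, hg, hg'⟩

lemma coeff_bound {X : Type*} [NormedAddCommGroup X] [NormedSpace ℝ X]
    (x : ℕ → X) (f : ℕ → (X →L[ℝ] ℝ)) (h : ∀ n, ‖x n‖ = 1 ∧ ‖f n‖ ≤ 1 ∧ f n (x n) = 1)
    (h' : ∀ m n, m < n → f m (x n) = 0) (a : ℕ → ℝ) (N : ℕ) (n : ℕ) (hn : n < N) :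
    |a n| ≤ 2 ^ n * ‖∑ k ∈ Finset.range N, a k • x k‖ := by
  induction n using Nat.strong_induction_on with
  | _ n ih =>
  set v := ∑ k ∈ Finset.range N, a k • x k with hv
  have h1 : f n v = ∑ k ∈ Finset.range n, a k * f n (x k) + a n := by
    have : f n v = ∑ k ∈ Finset.range N, a k * f n (x k) := by simp [hv]
    rw [this, ← Finset.sum_range_add_sum_Ico _ (Nat.succ_le_of_lt hn), Finset.sum_range_succ,
      (h n).2.2, mul_one, Finset.sum_eq_zero (s := Finset.Ico _ _), add_zero]
    intro k hk
    rw [h' n k (by simp at hk; omega), mul_zero]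
  have hf : ∀ y, |f n y| ≤ ‖y‖ := fun y => by
    have := (f n).le_of_opNorm_le (h n).2.1 y
    simpa using this
  have h2 : |∑ k ∈ Finset.range n, a k * f n (x k)| ≤ ∑ k ∈ Finset.range n, 2 ^ k * ‖v‖ := by
    refine (Finset.abs_sum_le_sum_abs _ _).trans (Finset.sum_le_sum fun k hk => ?_)
    have hk := Finset.mem_range.1 hk
    rw [abs_mul]
    have h3 := ih k hk (hk.trans hn)
    have h4 := hf (x k)
    rw [(h k).1] at h4
    nlinarith [abs_nonneg (a k)]
  have h5 : ∑ k ∈ Finset.range n, (2 : ℝ) ^ k * ‖v‖ = (2 ^ n - 1) * ‖v‖ := by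
    rw [← Finset.sum_mul, geom_sum_eq (by norm_num)]; norm_num
  have h6 : a n = f n v - ∑ k ∈ Finset.range n, a k * f n (x k) := by rw [h1]; ring
  calc |a n| ≤ |f n v| + |∑ k ∈ Finset.range n, a k * f n (x k)| := by
        rw [h6]; exact abs_sub _ _
    _ ≤ ‖v‖ + (2 ^ n - 1) * ‖v‖ := by rw [← h5]; exact add_le_add (hf v) h2
    _ = _ := by ring

lemma exists_perturb {X Y : Type*} [NormedAddCommGroup X] [NormedSpace ℝ X]
    [NormedAddCommGroup Y] [NormedSpace ℝ Y]
    (T : X →L[ℝ] Y) (E : Submodule ℝ X) (hE : Dense (E : Set X))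
    (M : Submodule ℝ X) (hM : ¬ FiniteDimensional ℝ M) (δ : ℝ) (h0 : 0 < δ) (h1 : δ < 1) :
    ∃ N : Submodule ℝ E, ¬ FiniteDimensional ℝ N ∧
      restrictedNorm (T.comp E.subtypeL) N ≤ (‖T‖ * δ + restrictedNorm T M) / (1 - δ) := by
  obtain ⟨x, f, hx, hf⟩ := exists_triangular M hM
  have hd : ∀ n : ℕ, ∃ e : E, ‖(e : X) - x n‖ ≤ δ / 2 * (1 / 4) ^ n := by
    intro n
    obtain ⟨y, hy, hyd⟩ := hE.exists_dist_lt (x n) (ε := δ / 2 * (1 / 4) ^ n) (by positivity)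
    refine ⟨⟨y, hy⟩, ?_⟩
    rw [dist_comm, dist_eq_norm] at hyd
    exact hyd.le
  choose e he using hd
  have hcb := coeff_bound x f (fun n => (hx n).2) hf
  -- the main perturbation estimate
  have key : ∀ (a : ℕ → ℝ) (N : ℕ),
      ‖(∑ k ∈ Finset.range N, a k • (e k : X)) - ∑ k ∈ Finset.range N, a k • x k‖
        ≤ δ * ‖∑ k ∈ Finset.range N, a k • x k‖ := by
    intro a N
    have hb := hcb a N
    set v := ∑ k ∈ Finset.range N, a k • x k with hv
    have : ∀ k ∈ Finset.range N, ‖a k • (e k : X) - a k • x k‖ ≤ δ / 2 * ‖v‖ * (1 / 2) ^ k := by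
      intro k hk
      rw [← smul_sub, norm_smul, Real.norm_eq_abs]
      calc |a k| * ‖(e k : X) - x k‖ ≤ (2 ^ k * ‖v‖) * (δ / 2 * (1 / 4) ^ k) :=
            mul_le_mul (hb k (Finset.mem_range.1 hk)) (he k) (norm_nonneg _) (by positivity)
        _ = δ / 2 * ‖v‖ * (2 ^ k * (1 / 4) ^ k) := by ring
        _ = _ := by rw [← mul_pow]; norm_num
    conv_lhs => rw [hv, ← Finset.sum_sub_distrib]
    refine (norm_sum_le_of_le _ this).trans ?_
    rw [← Finset.mul_sum]
    have := sum_geometric_two_le N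
    have h3 : 0 ≤ δ / 2 * ‖v‖ := by positivity
    nlinarith
  have hxe : ∀ (a : ℕ → ℝ) (N : ℕ), (1 - δ) * ‖∑ k ∈ Finset.range N, a k • x k‖
      ≤ ‖∑ k ∈ Finset.range N, a k • (e k : X)‖ := by
    intro a N
    have := key a N
    have h2 := norm_sub_norm_le (∑ k ∈ Finset.range N, a k • x k)
      (∑ k ∈ Finset.range N, a k • (e k : X))
    rw [norm_sub_rev] at h2
    linarith
  have hli : ∀ a : ℕ →₀ ℝ, ∃ N, a.support ⊆ Finset.range N ∧
      ((Finsupp.linearCombination ℝ e a : E) : X) = ∑ k ∈ Finset.range N, a k • (e k : X) := by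
    intro a
    obtain ⟨N, hN⟩ := a.support.exists_nat_subset_range
    refine ⟨N, hN, ?_⟩
    rw [Finsupp.linearCombination_apply, Finsupp.sum_of_support_subset _ hN _ (by simp)]
    simp
  refine ⟨LinearMap.range (Finsupp.linearCombination ℝ e), ?_, ?_⟩
  · intro hfin
    have hinj : Function.Injective (Finsupp.linearCombination ℝ e) := by
      rw [← LinearMap.ker_eq_bot, Submodule.eq_bot_iff]
      intro a ha
      obtain ⟨N, hN, hs⟩ := hli a
      rw [LinearMap.mem_ker.1 ha] at hs
      have h2 := hxe a N
      rw [← hs] at h2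
      simp only [ZeroMemClass.coe_zero, norm_zero] at h2
      have h3 : ‖∑ k ∈ Finset.range N, a k • x k‖ = 0 := by
        nlinarith [norm_nonneg (∑ k ∈ Finset.range N, a k • x k)]
      ext n
      by_cases hn : n ∈ a.support
      · have := hcb a N n (Finset.mem_range.1 (hN hn))
        rw [h3, mul_zero] at this
        simpa using this
      · simpa using hn
    have : FiniteDimensional ℝ (ℕ →₀ ℝ) :=
      (LinearEquiv.ofInjective _ hinj).symm.finiteDimensional
    have hfn := Module.Finite.finite_basis (Finsupp.basisSingleOne (R := ℝ) (ι := ℕ))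
    exact not_finite ℕ
  · have hR : 0 ≤ restrictedNorm T M := restrictedNorm_nonneg _ _
    have h1' : 0 < 1 - δ := by linarith
    refine ContinuousLinearMap.opNorm_le_bound _ (by positivity) ?_
    rintro ⟨y, a, rfl⟩
    obtain ⟨N, hN, hs⟩ := hli a
    change ‖T ((Finsupp.linearCombination ℝ e a : E) : X)‖ ≤
      _ * ‖((Finsupp.linearCombination ℝ e a : E) : X)‖
    rw [hs]
    have hk := key a N
    have hk2 := hxe a N
    have hvM : ∑ k ∈ Finset.range N, a k • x k ∈ M :=
      M.sum_mem fun k _ => M.smul_mem _ (hx k).1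
    set v := ∑ k ∈ Finset.range N, a k • x k
    set w := ∑ k ∈ Finset.range N, a k • (e k : X)
    have hTv : ‖T v‖ ≤ restrictedNorm T M * ‖v‖ :=
      (T.comp M.subtypeL).le_opNorm ⟨v, hvM⟩
    have hTw : ‖T w‖ ≤ (‖T‖ * δ + restrictedNorm T M) * ‖v‖ := by
      have e1 : T w = T (w - v) + T v := by simp
      have e2 := T.le_opNorm (w - v)
      have e3 := norm_add_le (T (w - v)) (T v)
      rw [← e1] at e3
      nlinarith [mul_le_mul_of_nonneg_left hk (norm_nonneg T)]
    rw [div_mul_eq_mul_div, le_div_iff₀ h1']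
    have hC : 0 ≤ ‖T‖ * δ + restrictedNorm T M := by positivity
    nlinarith [mul_le_mul_of_nonneg_left hk2 hC]

/-- `Γ` is densely invariant: `Γ(T|_E) = Γ(T)` for any dense subspace `E`. -/
theorem gamma_densely_invariant {X Y : Type*} [NormedAddCommGroup X] [NormedSpace ℝ X]
    [NormedAddCommGroup Y] [NormedSpace ℝ Y] (hX : ¬ FiniteDimensional ℝ X)
    (T : X →L[ℝ] Y) (E : Submodule ℝ X) (hE : Dense (E : Set X)) :
    opGamma (T.comp E.subtypeL) = opGamma T := by
  have htop : ¬ FiniteDimensional ℝ (⊤ : Submodule ℝ X) := fun h =>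
    hX (Submodule.topEquiv (R := ℝ) (M := X)).finiteDimensional
  have bdd : BddBelow {r : ℝ | ∃ M : Submodule ℝ E, ¬ FiniteDimensional ℝ M ∧
      r = restrictedNorm (T.comp E.subtypeL) M} :=
    ⟨0, by rintro _ ⟨M, _, rfl⟩; exact restrictedNorm_nonneg _ _⟩
  have bdd' : BddBelow {r : ℝ | ∃ M : Submodule ℝ X, ¬ FiniteDimensional ℝ M ∧
      r = restrictedNorm T M} :=
    ⟨0, by rintro _ ⟨M, _, rfl⟩; exact restrictedNorm_nonneg _ _⟩
  apply le_antisymm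
  · refine le_csInf ⟨_, ⊤, htop, rfl⟩ ?_
    rintro _ ⟨M, hM, rfl⟩
    set G := opGamma (T.comp E.subtypeL) with hG
    have hG0 : 0 ≤ G := Real.sInf_nonneg (by rintro _ ⟨M, _, rfl⟩; exact restrictedNorm_nonneg _ _)
    by_contra! hlt
    have hd : 0 < ‖T‖ + G + 1 := by positivity
    have hR : 0 ≤ restrictedNorm T M := restrictedNorm_nonneg _ _
    set δ := (G - restrictedNorm T M) / (‖T‖ + G + 1) with hδ
    have h0 : 0 < δ := div_pos (by linarith) hd
    have h1 : δ < 1 := by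
      rw [hδ, div_lt_one hd]; linarith [norm_nonneg T]
    obtain ⟨N, hN, hle⟩ := exists_perturb T E hE M hM δ h0 h1
    have h2 : G ≤ _ := (csInf_le bdd ⟨N, hN, rfl⟩).trans hle
    rw [le_div_iff₀ (by linarith)] at h2
    have h3 : δ * (‖T‖ + G + 1) = G - restrictedNorm T M := div_mul_cancel₀ _ hd.ne'
    nlinarith
  · obtain ⟨N, hN, -⟩ := exists_perturb T E hE ⊤ htop (1 / 2) (by norm_num) (by norm_num)
    refine le_csInf ⟨_, N, hN, rfl⟩ ?_
    rintro _ ⟨M, hM, rfl⟩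
    have hinj : Function.Injective E.subtype := E.injective_subtype
    refine (csInf_le bdd' ⟨M.map E.subtype, fun h => hM ?_, rfl⟩).trans ?_
    · exact (Submodule.equivMapOfInjective E.subtype hinj M).symm.finiteDimensional
    · refine ContinuousLinearMap.opNorm_le_bound _ (restrictedNorm_nonneg _ _) ?_
      rintro ⟨_, y, hy, rfl⟩
      exact ((T.comp E.subtypeL).comp M.subtypeL).le_opNorm ⟨y, hy⟩
end

section
/- Let X and Y be real normed vector spaces with X infinite-dimensional, let T : X → Y be a bounded linear operator, and let E be a dense linear subspace of X. Then Δ(T|_E) = Δ(T), where Δ(T|_E) is computed with E in place of X; i.e., the quantity Δ is densely invariant for bounded operators. -/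
/-- `Δ(T) = sup_{M ∈ I(X)} Γ(T|_M)`. -/
noncomputable def opDelta {X Y : Type*} [NormedAddCommGroup X] [NormedSpace ℝ X]
    [NormedAddCommGroup Y] [NormedSpace ℝ Y] (T : X →L[ℝ] Y) : ℝ :=
  sSup {r : ℝ | ∃ M : Submodule ℝ X, ¬ FiniteDimensional ℝ M ∧
    r = opGamma (T.comp M.subtypeL)}

section helpers
variable {X Y : Type*} [NormedAddCommGroup X] [NormedSpace ℝ X]
    [NormedAddCommGroup Y] [NormedSpace ℝ Y]

lemma rn_nonneg (T : X →L[ℝ] Y) (M : Submodule ℝ X) : 0 ≤ restrictedNorm T M := by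
  unfold restrictedNorm
  positivity

lemma rn_le (T : X →L[ℝ] Y) (M : Submodule ℝ X) {C : ℝ} (hC : 0 ≤ C)
    (h : ∀ x ∈ M, ‖T x‖ ≤ C * ‖x‖) : restrictedNorm T M ≤ C :=
  ContinuousLinearMap.opNorm_le_bound _ hC (fun x => h x x.2)

lemma le_rn (T : X →L[ℝ] Y) (M : Submodule ℝ X) {x : X} (hx : x ∈ M) :
    ‖T x‖ ≤ restrictedNorm T M * ‖x‖ :=
  (T.comp M.subtypeL).le_opNorm ⟨x, hx⟩

lemma rn_map (T : X →L[ℝ] Y) (E : Submodule ℝ X) (V : Submodule ℝ E) :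
    restrictedNorm (T.comp E.subtypeL) V = restrictedNorm T (V.map E.subtype) := by
  apply le_antisymm
  · refine rn_le _ _ (rn_nonneg _ _) fun x hx => ?_
    exact le_rn T (V.map E.subtype) (x := (x : X)) ⟨x, hx, rfl⟩
  · refine rn_le _ _ (rn_nonneg _ _) ?_
    rintro _ ⟨x, hx, rfl⟩
    exact le_rn (T.comp E.subtypeL) V hx

lemma fd_map {Z W : Type*} [AddCommGroup Z] [Module ℝ Z] [AddCommGroup W] [Module ℝ W]
    (f : Z →ₗ[ℝ] W) (hf : Function.Injective f) (V : Submodule ℝ Z) :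
    FiniteDimensional ℝ (V.map f) ↔ FiniteDimensional ℝ V :=
  (Module.Finite.equiv_iff (Submodule.equivMapOfInjective f hf V)).symm

lemma gamma_le (T : X →L[ℝ] Y) (M V : Submodule ℝ X) (hVM : V ≤ M)
    (hV : ¬ FiniteDimensional ℝ V) : opGamma (T.comp M.subtypeL) ≤ restrictedNorm T V := by
  refine csInf_le ⟨0, ?_⟩ ?_
  · rintro _ ⟨M, -, rfl⟩
    exact rn_nonneg _ _
  · have e : (V.comap M.subtype).map M.subtype = V := by
      rw [Submodule.map_comap_subtype, inf_eq_right.2 hVM]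
    refine ⟨V.comap M.subtype, ?_, ?_⟩
    · rw [← fd_map M.subtype M.injective_subtype, e]; exact hV
    · rw [rn_map, e]

lemma le_gamma (T : X →L[ℝ] Y) (M : Submodule ℝ X) (hM : ¬ FiniteDimensional ℝ M) {c : ℝ}
    (h : ∀ V : Submodule ℝ X, V ≤ M → ¬ FiniteDimensional ℝ V → c ≤ restrictedNorm T V) :
    c ≤ opGamma (T.comp M.subtypeL) := by
  refine le_csInf ⟨_, ⊤, ?_, rfl⟩ ?_
  · rw [← fd_map M.subtype M.injective_subtype, Submodule.map_subtype_top]; exact hM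
  · rintro _ ⟨V, hV, rfl⟩
    rw [rn_map]
    refine h _ (Submodule.map_subtype_le _ _) ?_
    rwa [fd_map M.subtype M.injective_subtype]

lemma gamma_nonneg (T : X →L[ℝ] Y) : 0 ≤ opGamma T := by
  refine Real.sInf_nonneg ?_
  rintro _ ⟨M, -, rfl⟩
  exact rn_nonneg _ _

lemma le_delta (T : X →L[ℝ] Y) (M : Submodule ℝ X) (hM : ¬ FiniteDimensional ℝ M) :
    opGamma (T.comp M.subtypeL) ≤ opDelta T := by
  refine le_csSup ⟨‖T‖, ?_⟩ ⟨M, hM, rfl⟩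
  rintro _ ⟨M, hM, rfl⟩
  exact (gamma_le T M M le_rfl hM).trans (rn_le _ _ (norm_nonneg _) fun x _ => T.le_opNorm x)

lemma delta_nonneg (T : X →L[ℝ] Y) : 0 ≤ opDelta T := by
  refine Real.sSup_nonneg ?_
  rintro _ ⟨M, -, rfl⟩
  exact gamma_nonneg _

lemma gamma_map_le (T : X →L[ℝ] Y) (E : Submodule ℝ X) (M : Submodule ℝ E)
    (hM : ¬ FiniteDimensional ℝ M) :
    opGamma ((T.comp E.subtypeL).comp M.subtypeL) ≤
      opGamma (T.comp (M.map E.subtype).subtypeL) := by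
  refine le_gamma T _ (by rwa [fd_map E.subtype E.injective_subtype]) fun V hV hVf => ?_
  have hVE : V ≤ E := hV.trans (Submodule.map_subtype_le _ _)
  have e : (V.comap E.subtype).map E.subtype = V := by
    rw [Submodule.map_comap_subtype, inf_eq_right.2 hVE]
  have := gamma_le (T.comp E.subtypeL) M (V.comap E.subtype) (by
    rw [← Submodule.map_le_map_iff_of_injective E.injective_subtype, e]; exact hV) (by
    rw [← fd_map E.subtype E.injective_subtype, e]; exact hVf)
  rwa [rn_map, e] at this

lemma exists_biorth (M : Submodule ℝ X) (hM : ¬ FiniteDimensional ℝ M) :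
    ∃ p : ℕ → X × (X →L[ℝ] ℝ), (∀ n, (p n).1 ∈ M ∧ (p n).2 (p n).1 = 1) ∧
      ∀ m n, m < n → (p m).2 (p n).1 = 0 ∧ (p n).2 (p m).1 = 0 := by
  refine exists_seq_of_forall_finset_exists
    (fun p : X × (X →L[ℝ] ℝ) => p.1 ∈ M ∧ p.2 p.1 = 1)
    (fun p q => p.2 q.1 = 0 ∧ q.2 p.1 = 0) fun s _ => ?_
  let g : X →ₗ[ℝ] (s → ℝ) := LinearMap.pi fun p => (p.1.2 : X →ₗ[ℝ] ℝ)
  let F : Submodule ℝ X := Submodule.span ℝ (Prod.fst '' (s : Set (X × (X →L[ℝ] ℝ))))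
  have hF : FiniteDimensional ℝ F :=
    FiniteDimensional.span_of_finite ℝ (s.finite_toSet.image _)
  have key : ¬ (M ⊓ LinearMap.ker g ≤ F) := by
    intro hle
    apply hM
    have h1 : FiniteDimensional ℝ (M ⊓ LinearMap.ker g : Submodule ℝ X) :=
      Submodule.finiteDimensional_of_le hle
    rw [FiniteDimensional, Module.Finite.iff_fg] at h1 ⊢
    exact Submodule.fg_of_fg_map_of_fg_inf_ker g (Module.Finite.iff_fg.1 inferInstance) h1
  obtain ⟨y, ⟨hyM, hyg⟩, hyF⟩ := SetLike.not_le_iff_exists.1 key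
  have hcl : IsClosed (F : Set X) := F.closed_of_finiteDimensional
  obtain ⟨f, hf1, hf2⟩ : ∃ f : X →L[ℝ] ℝ, f y ≠ 0 ∧ ∀ x ∈ F, f x = 0 := by
    obtain ⟨f, u, hu1, hu2⟩ := geometric_hahn_banach_closed_point F.convex hcl hyF
    have hu : 0 < u := by simpa using hu1 0 F.zero_mem
    refine ⟨f, (hu.trans hu2).ne', fun x hx => ?_⟩
    by_contra hne
    have := hu1 (((u + 1) / f x) • x) (F.smul_mem _ hx)
    rw [map_smul, smul_eq_mul, div_mul_cancel₀ _ hne] at this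
    linarith
  refine ⟨(y, (f y)⁻¹ • f), ⟨hyM, by simp [hf1]⟩, fun p hp => ⟨?_, ?_⟩⟩
  · exact congrFun (LinearMap.mem_ker.1 hyg) ⟨p, hp⟩
  · have : f p.1 = 0 := hf2 _ (Submodule.subset_span ⟨p, hp, rfl⟩)
    simp [this]

lemma exists_perturb_s3 (E : Submodule ℝ X) (hE : Dense (E : Set X))
    (M : Submodule ℝ X) (hM : ¬ FiniteDimensional ℝ M) {δ : ℝ} (hδ : 0 < δ) :
    ∃ (A : (ℕ →₀ ℝ) →ₗ[ℝ] X) (B : (ℕ →₀ ℝ) →ₗ[ℝ] E), Function.Injective A ∧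
      (∀ c, A c ∈ M) ∧ ∀ c, ‖(B c : X) - A c‖ ≤ δ * ‖A c‖ := by
  obtain ⟨p, hp1, hp2⟩ := exists_biorth M hM
  have hex : ∀ n, ∃ e : E, ‖(e : X) - (p n).1‖ * ‖(p n).2‖ ≤ δ * (1 / 2) ^ (n + 1) := by
    intro n
    have hpos : 0 < δ * (1 / 2) ^ (n + 1) / (‖(p n).2‖ + 1) := by positivity
    obtain ⟨e, he, hd⟩ := hE.exists_dist_lt (p n).1 hpos
    refine ⟨⟨e, he⟩, ?_⟩
    rw [dist_comm, dist_eq_norm, lt_div_iff₀ (by positivity)] at hd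
    have := norm_nonneg (e - (p n).1)
    simp only
    nlinarith
  choose e he using hex
  let A : (ℕ →₀ ℝ) →ₗ[ℝ] X := Finsupp.linearCombination ℝ fun n => (p n).1
  let B : (ℕ →₀ ℝ) →ₗ[ℝ] E := Finsupp.linearCombination ℝ e
  have hc : ∀ c n, (p n).2 (A c) = c n := by
    intro c n
    simp only [A, Finsupp.linearCombination_apply, Finsupp.sum, map_sum, map_smul, smul_eq_mul]
    rw [Finset.sum_eq_single n]
    · rw [(hp1 n).2, mul_one]
    · intro b _ hb
      rcases lt_or_gt_of_ne hb with h | h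
      · rw [(hp2 _ _ h).2, mul_zero]
      · rw [(hp2 _ _ h).1, mul_zero]
    · intro h
      rw [Finsupp.notMem_support_iff.1 h, zero_mul]
  refine ⟨A, B, ?_, ?_, ?_⟩
  · intro c d h
    ext n
    rw [← hc c n, ← hc d n, h]
  · intro c
    simp only [A, Finsupp.linearCombination_apply, Finsupp.sum]
    exact M.sum_mem fun n _ => M.smul_mem _ (hp1 n).1
  · intro c
    have h1 : (B c : X) - A c = ∑ n ∈ c.support, c n • ((e n : X) - (p n).1) := by
      simp [A, B, Finsupp.linearCombination_apply, Finsupp.sum, smul_sub]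
    have hs : ∑ n ∈ c.support, ((1 : ℝ) / 2) ^ (n + 1) ≤ 1 := by
      have hsum : HasSum (fun n : ℕ => ((1 : ℝ) / 2) ^ (n + 1)) 1 := by
        have := hasSum_geometric_two.mul_right (1 / 2 : ℝ)
        norm_num at this
        simpa [pow_succ] using this
      exact sum_le_hasSum _ (fun _ _ => by positivity) hsum
    rw [h1]
    calc _ ≤ ∑ n ∈ c.support, ‖c n • ((e n : X) - (p n).1)‖ := norm_sum_le _ _
      _ ≤ ∑ n ∈ c.support, (δ * ‖A c‖) * (1 / 2) ^ (n + 1) := by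
        refine Finset.sum_le_sum fun n _ => ?_
        rw [norm_smul]
        have h2 : ‖c n‖ ≤ ‖(p n).2‖ * ‖A c‖ := by
          rw [← hc c n]; exact (p n).2.le_opNorm _
        calc _ ≤ (‖(p n).2‖ * ‖A c‖) * ‖(e n : X) - (p n).1‖ := by gcongr
          _ = (‖(e n : X) - (p n).1‖ * ‖(p n).2‖) * ‖A c‖ := by ring
          _ ≤ (δ * (1 / 2) ^ (n + 1)) * ‖A c‖ := 
            mul_le_mul_of_nonneg_right (he n) (norm_nonneg _)
          _ = _ := by ring
      _ = (δ * ‖A c‖) * ∑ n ∈ c.support, (1 / 2) ^ (n + 1) := by rw [Finset.mul_sum]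
      _ ≤ (δ * ‖A c‖) * 1 := by gcongr
      _ = _ := mul_one _

lemma gamma_bound (T : X →L[ℝ] Y) (E : Submodule ℝ X) (hE : Dense (E : Set X))
    (M : Submodule ℝ X) (hM : ¬ FiniteDimensional ℝ M) {δ : ℝ} (hδ : 0 < δ) (hδ1 : δ < 1) :
    opGamma (T.comp M.subtypeL) ≤ (1 + δ) * opDelta (T.comp E.subtypeL) + ‖T‖ * δ := by
  obtain ⟨A, B, hA, hAM, hAB⟩ := exists_perturb_s3 E hE M hM hδ
  have hB : Function.Injective B := by
    rw [injective_iff_map_eq_zero]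
    intro c hc
    have h := hAB c
    rw [hc] at h
    simp only [ZeroMemClass.coe_zero, zero_sub, norm_neg] at h
    have h0 : ‖A c‖ = 0 := by nlinarith [norm_nonneg (A c)]
    exact hA (by rw [norm_eq_zero.1 h0, map_zero])
  have hinf : ¬ FiniteDimensional ℝ (LinearMap.range B) := by
    rw [← show FiniteDimensional ℝ (ℕ →₀ ℝ) ↔ FiniteDimensional ℝ (LinearMap.range B) from Module.Finite.equiv_iff (LinearEquiv.ofInjective B hB)]
    intro h
    have := Module.Finite.finite_basis (Finsupp.basisSingleOne (R := ℝ) (ι := ℕ))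
    exact not_finite ℕ
  have hle := le_delta (T.comp E.subtypeL) (LinearMap.range B) hinf
  have key : (opGamma (T.comp M.subtypeL) - ‖T‖ * δ) / (1 + δ) ≤
      opGamma ((T.comp E.subtypeL).comp (LinearMap.range B).subtypeL) := by
    refine le_gamma _ _ hinf fun V hV hVf => ?_
    have e : (V.comap B).map B = V := Submodule.map_comap_eq_of_le hV
    have hW : ¬ FiniteDimensional ℝ ((V.comap B).map A) := by
      rw [fd_map A hA, ← fd_map B hB, e]; exact hVf
    have hWM : (V.comap B).map A ≤ M := by
      rintro _ ⟨c, -, rfl⟩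
      exact hAM c
    have h1 := gamma_le T M _ hWM hW
    have hr := rn_nonneg (T.comp E.subtypeL) V
    rw [div_le_iff₀ (by positivity), sub_le_iff_le_add]
    refine h1.trans (rn_le _ _ (by positivity) ?_)
    rintro _ ⟨c, hc, rfl⟩
    have h2 : ‖T (B c : X)‖ ≤ restrictedNorm (T.comp E.subtypeL) V * ‖(B c : X)‖ :=
      le_rn (T.comp E.subtypeL) V hc
    have h3 : ‖T ((B c : X) - A c)‖ ≤ ‖T‖ * (δ * ‖A c‖) :=
      (T.le_opNorm _).trans (by gcongr; exact hAB c)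
    have h4 : ‖(B c : X)‖ ≤ (1 + δ) * ‖A c‖ := by
      have := norm_add_le ((B c : X) - A c) (A c)
      rw [sub_add_cancel] at this
      linarith [hAB c]
    have h5 : ‖T (A c)‖ ≤ ‖T (B c : X)‖ + ‖T ((B c : X) - A c)‖ := by
      have := norm_sub_le (T (B c : X)) (T ((B c : X) - A c))
      rwa [← map_sub, sub_sub_cancel] at this
    have h6 := mul_le_mul_of_nonneg_left h4 hr
    linarith
  have := key.trans hle
  rw [div_le_iff₀ (by positivity)] at this
  linarith

end helpers

/-- `Δ` is densely invariant: `Δ(T|_E) = Δ(T)` for any dense subspace `E`. -/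
theorem delta_densely_invariant {X Y : Type*} [NormedAddCommGroup X] [NormedSpace ℝ X]
    [NormedAddCommGroup Y] [NormedSpace ℝ Y] (hX : ¬ FiniteDimensional ℝ X)
    (T : X →L[ℝ] Y) (E : Submodule ℝ X) (hE : Dense (E : Set X)) :
    opDelta (T.comp E.subtypeL) = opDelta T := by
  apply le_antisymm
  · refine Real.sSup_le ?_ (delta_nonneg T)
    rintro _ ⟨M, hM, rfl⟩
    exact (gamma_map_le T E M hM).trans
      (le_delta T _ (by rwa [fd_map E.subtype E.injective_subtype]))
  · refine Real.sSup_le ?_ (delta_nonneg _)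
    rintro _ ⟨M, hM, rfl⟩
    have hlim : Filter.Tendsto
        (fun δ : ℝ => (1 + δ) * opDelta (T.comp E.subtypeL) + ‖T‖ * δ)
        (nhdsWithin 0 (Set.Ioi 0)) (nhds (opDelta (T.comp E.subtypeL))) := by
      have hc : Continuous
          (fun δ : ℝ => (1 + δ) * opDelta (T.comp E.subtypeL) + ‖T‖ * δ) := by fun_prop
      have := (hc.tendsto 0).mono_left (nhdsWithin_le_nhds (s := Set.Ioi 0))
      simpa using this
    refine ge_of_tendsto hlim ?_
    filter_upwards [Ioo_mem_nhdsGT (zero_lt_one' ℝ)] with δ hδ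
    exact gamma_bound T E hE M hM hδ.1 hδ.2
end

section
/- Let X be a real normed vector space, let (m_n)_{n≥1} be vectors in X and (x'_n)_{n≥1} continuous linear functionals on X such that for every n, ‖m_n‖ = ‖x'_n‖ = x'_n(m_n) = 1 and x'_i(m_n) = 0 for all 1 ≤ i < n. Let 0 < ε < 1 and 0 < δ ≤ 1, and let (z_n)_{n≥1} be vectors in X satisfying ‖z_n − m_n‖ ≤ 2^{1−2n} ε δ and x'_i(z_n) = 0 for all 1 ≤ i < n. Then the family (z_n)_{n≥1} is linearly independent; in particular, the span of {z_1, z_2, …} is an infinite-dimensional subspace of X. -/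
/-- Let `(m n)` and `(x' n)` form a biorthogonal system with
`‖m n‖ = ‖x' n‖ = x' n (m n) = 1` and `x' i (m n) = 0` for `i < n`.  If `0 < ε < 1`,
`0 < δ ≤ 1`, and `(z n)` satisfies `‖z n - m n‖ ≤ ε * δ / 2 ^ (2 * n + 1)` together with
`x' i (z n) = 0` for `i < n`, then the family `(z n)` is linearly independent; in
particular its span is an infinite-dimensional subspace of `X`. (Indexing starts at `0`,
so the paper's bound `2 ^ (1 - 2 * n) * ε * δ` for `n ≥ 1` becomes
`ε * δ / 2 ^ (2 * n + 1)` for `n ≥ 0`.) -/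
theorem linearIndependent_perturbed {X : Type*} [NormedAddCommGroup X] [NormedSpace ℝ X]
    (m : ℕ → X) (x' : ℕ → (X →L[ℝ] ℝ))
    (hnorm : ∀ n, ‖m n‖ = 1 ∧ ‖x' n‖ = 1 ∧ x' n (m n) = 1)
    (horth : ∀ i n, i < n → x' i (m n) = 0)
    (ε δ : ℝ) (hε0 : 0 < ε) (hε1 : ε < 1) (hδ0 : 0 < δ) (hδ1 : δ ≤ 1)
    (z : ℕ → X)
    (hz : ∀ n, ‖z n - m n‖ ≤ ε * δ / 2 ^ (2 * n + 1))
    (hzorth : ∀ i n, i < n → x' i (z n) = 0) :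
    LinearIndependent ℝ z ∧
      ¬ FiniteDimensional ℝ (Submodule.span ℝ (Set.range z)) := by
  have hne : ∀ n, x' n (z n) ≠ 0 := by
    intro n h0
    have h1 : |x' n (z n - m n)| ≤ ‖z n - m n‖ := by
      have := (x' n).le_opNorm (z n - m n)
      rwa [(hnorm n).2.1, one_mul, Real.norm_eq_abs] at this
    rw [map_sub, h0, (hnorm n).2.2] at h1
    norm_num at h1
    have h2 : ε * δ / 2 ^ (2 * n + 1) < 1 := by
      have h3 : (1 : ℝ) ≤ 2 ^ (2 * n + 1) := one_le_pow₀ (by norm_num)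
      rw [div_lt_one (by positivity)]
      nlinarith
    linarith [hz n]
  have hli : LinearIndependent ℝ z := by
    rw [linearIndependent_iff']
    intro s g hs i
    induction i using Nat.strong_induction_on with
    | _ i ih =>
      intro hi
      have h := congrArg (x' i) hs
      rw [map_sum, map_zero, Finset.sum_eq_single_of_mem i hi] at h
      · rw [map_smul, smul_eq_mul] at h
        exact (mul_eq_zero.mp h).resolve_right (hne i)
      · intro j hj hji
        rcases lt_or_gt_of_ne hji with hlt | hgt
        · simp [ih j hlt hj]
        · simp [hzorth i j hgt]
  refine ⟨hli, fun hfd => ?_⟩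
  have := (linearIndependent_span hli).finite_of_isNoetherian
  exact not_finite ℕ
end
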